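/- Let d ≥ 1 and n ≥ d be integers, and let γ = (1 2 ⋯ d) ∈ S_d be the full cycle. Then the unitary Weingarten function satisfies Wg(n, γ) = (−1)^{d−1} · Cat_{d−1} / Π_{j=−d+1}^{d−1} (n−j), where Cat_{d−1} = (2(d−1))!/(d!·(d−1)!) is the (d−1)-st Catalan number. -/

import Mathlib

/-- The number of cycles of a permutation of `Fin d`, counting fixed points as cycles of
length one. -/
def Equiv.Perm.cycleCount {d : ℕ} (σ : Equiv.Perm (Fin d)) : ℕ :=
  (Finset.univ.filter fun x => σ x = x).card + σ.cycleType.card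

/-!
Write `G = ∑ σ, x ^ #σ • σ`. Since merging a fixed point into another cycle lowers the number of
cycles by one, `G` is a product of factors `x + J` over the Jucys–Murphy elements `J`, so the Young
symmetrizer of a hook with `d` cells and leg length `b` is an eigenvector of `G`, with eigenvalue
`∏ i < d, (x - b + i)`, the product of `x + (content)` over the cells. The alternating sum `Z` of
the symmetrizers of all hooks with a given corner has as its coefficient at `σ` the determinant of
`1 - σ` with one column replaced by ones, which vanishes unless `σ` is a full cycle; the
coefficients of `Z` add up to `d!`. If `W` is the inverse of `G`, then the coefficient of `W * Z`
at `1` is therefore `d!` times the value of `W` at a full cycle on the one hand, and the alternating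
sum of the reciprocal eigenvalues on the other. The latter is the `(d - 1)`-st finite difference of
the reciprocal of a rising factorial, which has a closed form.
-/

namespace Weingarten

open Equiv Finset

section CycleType

variable {α : Type*} [DecidableEq α] {σ : Perm α} {u k : α}

theorem disjoint_swap (hu : σ u = u) (hk : σ k = k) : (swap u k).Disjoint σ := fun x => by
  by_cases hx : x = u ∨ x = k
  · exact .inr (by rcases hx with rfl | rfl <;> assumption)
  · push Not at hx
    exact .inl (swap_apply_of_ne_of_ne hx.1 hx.2)

variable [Fintype α]

theorem cycleType_swap_mul_of_isCycle (hσ : σ.IsCycle) (hu : σ u ≠ u) (hk : σ k = k) :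
    (swap u k * σ).cycleType = {#σ.support + 1} := by
  obtain ⟨l, hl⟩ : ∃ l, σ.toList u = u :: l := by
    obtain ⟨a, l, hal⟩ := List.exists_cons_of_ne_nil
      (show σ.toList u ≠ [] by simpa [Perm.toList_eq_nil_iff] using hu)
    have hhead := Perm.toList_getElem_zero σ u (Perm.mem_support.2 hu)
    simp only [hal, List.getElem_cons_zero] at hhead
    exact ⟨l, hhead ▸ hal⟩
  have hform : swap u k * σ = (k :: u :: l).formPerm := by
    rw [List.formPerm_cons_cons, swap_comm, ← hl, Perm.formPerm_toList, hσ.cycleOf_eq hu]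
  have hnodup : (k :: u :: l).Nodup := by
    rw [← hl, List.nodup_cons, Perm.mem_toList_iff]
    exact ⟨fun h => hu (h.1.apply_eq_self_iff.2 hk), Perm.nodup_toList σ u⟩
  have hlen : (u :: l).length = #σ.support := by
    rw [← hl, Perm.length_toList, hσ.cycleOf_eq hu]
  rw [hform, (List.isCycle_formPerm hnodup (by simp)).cycleType,
    List.support_formPerm_of_nodup _ hnodup (by simp), List.toFinset_card_of_nodup hnodup,
    List.length_cons, hlen]

theorem card_cycleType_swap_mul_add_card_support (huk : u ≠ k) (hk : σ k = k) :
    (swap u k * σ).cycleType.card + (#σ.support + 1) =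
      σ.cycleType.card + #(swap u k * σ).support := by
  by_cases hu : σ u = u
  · have hdisj := disjoint_swap hu hk
    rw [hdisj.cycleType_mul, hdisj.card_support_mul, Perm.card_support_swap huk,
      (Perm.isCycle_swap huk).cycleType, Multiset.card_add, Multiset.card_singleton]
    ring
  · set c := σ.cycleOf u
    set ρ := σ * c⁻¹
    have hcu : c u ≠ u := by rwa [Perm.cycleOf_apply_self]
    have hck : c k = k := by
      rw [Perm.cycleOf_apply]
      split_ifs <;> simp [hk]
    have hdisj : c.Disjoint ρ := (Perm.disjoint_mul_inv_of_mem_cycleFactorsFinset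
      (Perm.cycleOf_mem_cycleFactorsFinset_iff.2 (Perm.mem_support.2 hu))).symm
    have hρk : ρ k = k := by
      rw [Perm.mul_apply, Perm.inv_eq_iff_eq.2 hck.symm, hk]
    have hdisj_swap : (swap u k * c).Disjoint ρ :=
      (disjoint_swap ((hdisj u).resolve_left hcu) hρk).mul_left hdisj
    have hσ : σ = c * ρ := by rw [hdisj.commute.eq, inv_mul_cancel_right]
    have hcycle := Perm.isCycle_cycleOf σ hu
    rw [hσ, ← mul_assoc, ← Perm.sum_cycleType, ← Perm.sum_cycleType, hdisj_swap.cycleType_mul,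
      hdisj.cycleType_mul, cycleType_swap_mul_of_isCycle hcycle hcu hck, hcycle.cycleType]
    simp only [Multiset.card_add, Multiset.card_singleton, Multiset.sum_add, Multiset.sum_singleton]
    ring

end CycleType

section CycleCount

variable {d : ℕ} {σ : Perm (Fin d)}

theorem cycleCount_add_card_support (σ : Perm (Fin d)) :
    σ.cycleCount + #σ.support = d + σ.cycleType.card := by
  have hcompl : #{x | σ x = x} + #σ.support = d :=
    (card_filter_add_card_filter_not (s := univ) (fun x => σ x = x)).trans (by simp)
  rw [Perm.cycleCount]
  lia

theorem cycleCount_swap_mul_add_one {u k : Fin d} (huk : u ≠ k) (hk : σ k = k) :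
    (swap u k * σ).cycleCount + 1 = σ.cycleCount := by
  have := card_cycleType_swap_mul_add_card_support huk hk
  have := cycleCount_add_card_support σ
  have := cycleCount_add_card_support (swap u k * σ)
  lia

theorem cycleCount_conj (σ τ : Perm (Fin d)) : (τ * σ * τ⁻¹).cycleCount = σ.cycleCount := by
  have := cycleCount_add_card_support σ
  have := cycleCount_add_card_support (τ * σ * τ⁻¹)
  simp only [Perm.cycleType_conj, Perm.card_support_conj] at this
  lia

theorem cycleCount_one : (1 : Perm (Fin d)).cycleCount = d := by
  simpa using cycleCount_add_card_support (1 : Perm (Fin d))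

theorem cycleCount_pos (hd : 0 < d) (σ : Perm (Fin d)) : 0 < σ.cycleCount := by
  refine Nat.pos_of_ne_zero fun h => hd.ne' ?_
  have hσ : σ = 1 :=
    Perm.cycleType_eq_zero.1 (Multiset.card_eq_zero.1 (Nat.eq_zero_of_add_eq_zero_left h))
  rwa [hσ, cycleCount_one] at h

end CycleCount

section PermSum

variable {α R : Type*} [DecidableEq α] [CommRing R] {U V T : Finset α} {u k z : α} {σ : Perm α}
  {f : Perm α → R} {c : R}

theorem inv_mem_permsOfFinset (hσ : σ ∈ permsOfFinset U) : σ⁻¹ ∈ permsOfFinset U := by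
  rw [mem_perms_of_finset_iff] at hσ ⊢
  exact fun hx => hσ fun h => hx (Perm.inv_eq_iff_eq.2 h.symm)

theorem mul_mem_permsOfFinset {τ : Perm α} (hσ : σ ∈ permsOfFinset U) (hτ : τ ∈ permsOfFinset U) :
    σ * τ ∈ permsOfFinset U := by
  rw [mem_perms_of_finset_iff] at *
  intro x hx
  by_contra hxU
  exact hx (by rw [Perm.mul_apply, not_imp_comm.1 hτ hxU, not_imp_comm.1 hσ hxU])

theorem swap_mem_permsOfFinset (hu : u ∈ U) (hk : k ∈ U) : swap u k ∈ permsOfFinset U := by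
  rw [mem_perms_of_finset_iff]
  intro x hx
  rcases eq_or_eq_of_swap_apply_ne_self hx with rfl | rfl <;> assumption

theorem permsOfFinset_mono (h : U ⊆ V) : permsOfFinset U ⊆ permsOfFinset V := fun σ hσ => by
  rw [mem_perms_of_finset_iff] at *
  exact fun hx => h (hσ hx)

theorem apply_eq_self_of_mem_permsOfFinset (hσ : σ ∈ permsOfFinset U) (hk : k ∉ U) : σ k = k :=
  not_imp_comm.1 (mem_perms_of_finset_iff.1 hσ) hk

theorem apply_mem_of_mem_permsOfFinset (hσ : σ ∈ permsOfFinset U) (hu : u ∈ U) : σ u ∈ U := by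
  by_contra h
  rw [σ.injective (apply_eq_self_of_mem_permsOfFinset hσ h)] at h
  exact h hu

theorem sum_permsOfFinset_insert {M : Type*} [AddCommMonoid M] (hk : k ∉ U) (F : Perm α → M) :
    ∑ π ∈ permsOfFinset (insert k U), F π =
      ∑ u ∈ insert k U, ∑ σ ∈ permsOfFinset U, F (swap u k * σ) := by
  rw [sum_sigma']
  refine sum_nbij' (fun π => ⟨π k, swap (π k) k * π⟩) (fun p => swap p.1 k * p.2) ?_ ?_ ?_ ?_ ?_
  · intro π hπ
    have hπk := apply_mem_of_mem_permsOfFinset hπ (mem_insert_self k U)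
    refine mem_sigma.2 ⟨hπk, mem_perms_of_finset_iff.2 fun {x} hx => ?_⟩
    have hmem := mul_mem_permsOfFinset (swap_mem_permsOfFinset hπk (mem_insert_self k U)) hπ
    refine mem_of_mem_insert_of_ne (mem_perms_of_finset_iff.1 hmem hx) ?_
    rintro rfl
    simp at hx
  · rintro ⟨u, σ⟩ h
    rw [mem_sigma] at h
    exact mul_mem_permsOfFinset (swap_mem_permsOfFinset h.1 (mem_insert_self _ _))
      (permsOfFinset_mono (subset_insert _ _) h.2)
  · simp
  · rintro ⟨u, σ⟩ h
    have hσk := apply_eq_self_of_mem_permsOfFinset (mem_sigma.1 h).2 hk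
    simp [hσk]
  · simp

variable (R) in
/-- The Jucys–Murphy element `∑ u ∈ U, (u k)` of the group algebra. -/
noncomputable def jucysMurphy (U : Finset α) (k : α) : MonoidAlgebra R (Perm α) :=
  ∑ u ∈ U, .single (swap u k) 1

/-- The element `∑ σ, f σ • σ` of the group algebra, with `σ` running over the permutations
supported in `U`. -/
noncomputable def permSum (f : Perm α → R) (U : Finset α) : MonoidAlgebra R (Perm α) :=
  ∑ σ ∈ permsOfFinset U, .single σ (f σ)

/-- The weight `f` gets multiplied by `c` whenever a fixed point `k` is merged into another cycle.
This is the condition under which `permSum f U` factors into Jucys–Murphy elements. -/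
def IsSwapScaling (f : Perm α → R) (c : R) : Prop :=
  ∀ ⦃σ u k⦄, u ≠ k → σ k = k → f (swap u k * σ) = c * f σ

theorem permSum_insert (hf : IsSwapScaling f c) (hk : k ∉ U) :
    permSum f (insert k U) = (1 + c • jucysMurphy R U k) * permSum f U := by
  have hterm : ∀ u ∈ U,
      ∑ σ ∈ permsOfFinset U, MonoidAlgebra.single (swap u k * σ) (f (swap u k * σ)) =
        c • .single (swap u k) 1 * permSum f U := fun u hu => by
    rw [permSum, mul_sum]
    refine sum_congr rfl fun σ hσ => ?_
    rw [hf (ne_of_mem_of_not_mem hu hk) (apply_eq_self_of_mem_permsOfFinset hσ hk),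
      MonoidAlgebra.smul_single, MonoidAlgebra.single_mul_single, smul_eq_mul, mul_one]
  rw [permSum, sum_permsOfFinset_insert hk, sum_insert hk, sum_congr rfl hterm, ← sum_mul,
    ← smul_sum, add_mul, one_mul, jucysMurphy, swap_self]
  rfl

theorem commute_jucysMurphy_single (hσ : σ ∈ permsOfFinset U) (hk : k ∉ U) (r : R) :
    Commute (jucysMurphy R U k) (.single σ r) := by
  rw [commute_iff_eq, jucysMurphy, sum_mul, mul_sum]
  refine (sum_nbij' σ σ.symm (fun u hu => apply_mem_of_mem_permsOfFinset hσ hu)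
    (fun u hu => apply_mem_of_mem_permsOfFinset (inv_mem_permsOfFinset hσ) hu)
    (fun u _ => σ.symm_apply_apply u) (fun u _ => σ.apply_symm_apply u) fun u _ => ?_).symm
  rw [MonoidAlgebra.single_mul_single, MonoidAlgebra.single_mul_single, mul_swap_eq_swap_mul,
    apply_eq_self_of_mem_permsOfFinset hσ hk, mul_comm r 1]

theorem commute_jucysMurphy_permSum (hUT : U ⊆ T) (hk : k ∉ T) (f : Perm α → R) :
    Commute (jucysMurphy R T k) (permSum f U) :=
  Commute.sum_right _ _ _ fun _ hσ =>
    commute_jucysMurphy_single (permsOfFinset_mono hUT hσ) hk _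

theorem commute_one_add_smul_jucysMurphy_permSum (hUT : U ⊆ T) (hk : k ∉ T) (c : R)
    (f : Perm α → R) : Commute (1 + c • jucysMurphy R T k) (permSum f U) :=
  (Commute.one_left _).add_left ((commute_jucysMurphy_permSum hUT hk f).smul_left c)

theorem permsOfFinset_eq_singleton_one (hU : #U ≤ 1) : permsOfFinset U = {1} := by
  have hcard : #(permsOfFinset U) = 1 := by
    rw [card_perms_of_finset, Nat.factorial_eq_one.2 hU]
  have hone : 1 ∈ permsOfFinset U := mem_perms_of_finset_iff.2 fun h => (h rfl).elim
  exact (eq_of_subset_of_card_le (singleton_subset_iff.2 hone) hcard.le).symm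

theorem permSum_of_card_le_one (hU : #U ≤ 1) (f : Perm α → R) : permSum f U = f 1 • 1 := by
  rw [permSum, permsOfFinset_eq_singleton_one hU, sum_singleton, MonoidAlgebra.one_def,
    MonoidAlgebra.smul_single, smul_eq_mul, mul_one]

theorem single_mul_permSum (χ : Perm α →* R) (hσ : σ ∈ permsOfFinset U) :
    .single σ (χ σ) * permSum χ U = permSum χ U := by
  rw [permSum, mul_sum]
  refine sum_nbij' (σ * ·) (σ⁻¹ * ·) (fun τ hτ => mul_mem_permsOfFinset hσ hτ)
    (fun τ hτ => mul_mem_permsOfFinset (inv_mem_permsOfFinset hσ) hτ)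
    (by simp) (by simp) fun τ _ => ?_
  rw [MonoidAlgebra.single_mul_single, map_mul]

theorem permSum_mul_single (χ : Perm α →* R) (hσ : σ ∈ permsOfFinset U) :
    permSum χ U * .single σ (χ σ) = permSum χ U := by
  rw [permSum, sum_mul]
  refine sum_nbij' (· * σ) (· * σ⁻¹) (fun τ hτ => mul_mem_permsOfFinset hτ hσ)
    (fun τ hτ => mul_mem_permsOfFinset hτ (inv_mem_permsOfFinset hσ))
    (by simp) (by simp) fun τ _ => ?_
  rw [MonoidAlgebra.single_mul_single, map_mul]

variable (R) in
/-- The sum of all permutations supported in `U`, the Young symmetrizer of a single row. -/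
noncomputable def symmetrizer (U : Finset α) : MonoidAlgebra R (Perm α) :=
  permSum (1 : Perm α →* R) U

theorem symmetrizer_insert (hk : k ∉ U) :
    symmetrizer R (insert k U) = symmetrizer R U * (1 + jucysMurphy R U k) := by
  have hone : IsSwapScaling (1 : Perm α →* R) 1 := fun σ u k _ _ => by simp
  rw [symmetrizer, permSum_insert hone hk,
    (commute_one_add_smul_jucysMurphy_permSum subset_rfl hk _ _).eq, one_smul, symmetrizer]

theorem swap_mul_symmetrizer (hu : u ∈ U) (hk : k ∈ U) :
    .single (swap u k) 1 * symmetrizer R U = symmetrizer R U :=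
  single_mul_permSum 1 (swap_mem_permsOfFinset hu hk)

theorem jucysMurphy_mul_symmetrizer (hUV : U ⊆ V) (hk : k ∈ V) :
    jucysMurphy R U k * symmetrizer R V = (#U : R) • symmetrizer R V := by
  rw [jucysMurphy, sum_mul, Nat.cast_smul_eq_nsmul, ← sum_const]
  exact sum_congr rfl fun u hu => swap_mul_symmetrizer (hUV hu) hk

section Sign

variable [Fintype α]

theorem permSum_univ (f : Perm α → R) :
    permSum f univ = ∑ σ, .single σ (f σ) := by
  have hperms : permsOfFinset (univ : Finset α) = univ :=
    eq_univ_of_forall fun σ => mem_perms_of_finset_iff.2 fun _ => mem_univ _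
  rw [permSum, hperms]

variable (R) in
/-- The sign character with values in `R`. -/
def signChar : Perm α →* R :=
  ((Int.castRingHom R : ℤ →* R).comp (Units.coeHom ℤ)).comp Perm.sign

variable (R) in
/-- The signed sum of all permutations supported in `U`, the Young symmetrizer of a single
column. -/
noncomputable def antisymmetrizer (U : Finset α) : MonoidAlgebra R (Perm α) :=
  permSum (signChar R) U

theorem antisymmetrizer_mul_swap (hu : u ∈ U) (hk : k ∈ U) (huk : u ≠ k) :
    antisymmetrizer R U * .single (swap u k) 1 = -antisymmetrizer R U := by
  have hsign : signChar R (swap u k) = -1 := by simp [signChar, Perm.sign_swap huk]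
  have h := permSum_mul_single (signChar R) (swap_mem_permsOfFinset hu hk)
  rw [hsign, MonoidAlgebra.single_neg, mul_neg] at h
  exact neg_eq_iff_eq_neg.1 h

theorem antisymmetrizer_mul_jucysMurphy (hUV : U ⊆ V) (hkU : k ∉ U) (hkV : k ∈ V) :
    antisymmetrizer R V * jucysMurphy R U k = -(#U : R) • antisymmetrizer R V := by
  rw [jucysMurphy, mul_sum, sum_congr rfl fun u hu =>
    antisymmetrizer_mul_swap (hUV hu) hkV (ne_of_mem_of_not_mem hu hkU), sum_const, neg_smul,
    Nat.cast_smul_eq_nsmul, smul_neg]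

theorem antisymmetrizer_mul_permSum (hf : IsSwapScaling f c) (hUV : U ⊆ V) :
    antisymmetrizer R V * permSum f U =
      (f 1 * ∏ j ∈ range #U, (1 - c * j)) • antisymmetrizer R V := by
  induction U using Finset.induction_on with
  | empty => rw [permSum_of_card_le_one (by simp)]; simp
  | insert k U hk ih =>
    rw [insert_subset_iff] at hUV
    rw [permSum_insert hf hk, ← mul_assoc, mul_add, mul_one, mul_smul_comm,
      antisymmetrizer_mul_jucysMurphy hUV.2 hk hUV.1, add_mul, smul_mul_assoc, smul_mul_assoc,
      ih hUV.2, card_insert_of_notMem hk, prod_range_succ]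
    module

variable [IsAddTorsionFree R]

-- In `(u k) (z k) = (z u) (u k)` the symmetrizer absorbs `(z k)` on the left-hand side, and the
-- antisymmetrizer absorbs `(z u)` on the right-hand side at the cost of a sign.
theorem antisymmetrizer_mul_swap_mul_symmetrizer (hzU : z ∈ U) (hzV : z ∈ V) (hu : u ∈ U)
    (hk : k ∈ V) (huz : u ≠ z) (hkz : k ≠ z) :
    antisymmetrizer R U * .single (swap u k) 1 * symmetrizer R V = 0 := by
  have : IsAddTorsionFree (MonoidAlgebra R (Perm α)) :=
    MonoidAlgebra.coeff_injective.isAddTorsionFree MonoidAlgebra.coeffAddEquiv.toAddMonoidHom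
  have hconj : swap u k * swap z k = swap z u * swap u k := by
    rw [mul_swap_eq_swap_mul, swap_apply_right, swap_apply_of_ne_of_ne huz.symm hkz.symm]
  rw [← self_eq_neg]
  calc antisymmetrizer R U * .single (swap u k) 1 * symmetrizer R V
      = antisymmetrizer R U * (.single (swap u k) 1 * .single (swap z k) 1) *
          symmetrizer R V := by
        simp only [mul_assoc, swap_mul_symmetrizer hzV hk]
    _ = antisymmetrizer R U * .single (swap z u) 1 * .single (swap u k) 1 *
          symmetrizer R V := by
        rw [mul_assoc (antisymmetrizer R U) (.single (swap z u) 1),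
          MonoidAlgebra.single_mul_single, hconj, MonoidAlgebra.single_mul_single]
    _ = -(antisymmetrizer R U * .single (swap u k) 1 * symmetrizer R V) := by
        rw [antisymmetrizer_mul_swap hzU hu huz.symm, neg_mul, neg_mul]

theorem antisymmetrizer_mul_jucysMurphy_mul_symmetrizer (hz : z ∈ U) (hUT : Disjoint U T)
    (hkU : k ∉ U) :
    antisymmetrizer R U * jucysMurphy R (U ∪ T) k * symmetrizer R (insert k (insert z T)) =
      (#T + 1 : R) • (antisymmetrizer R U * symmetrizer R (insert k (insert z T))) := by
  have hzT : z ∉ T := disjoint_left.1 hUT hz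
  have hsplit : jucysMurphy R (U ∪ T) k =
      jucysMurphy R (U.erase z) k + jucysMurphy R (insert z T) k := by
    have hdisj : Disjoint (U.erase z) (insert z T) :=
      disjoint_insert_right.2 ⟨notMem_erase z U, hUT.mono_left (erase_subset z U)⟩
    rw [jucysMurphy, jucysMurphy, jucysMurphy, ← sum_union hdisj, union_insert, ← insert_union,
      insert_erase hz]
  have hvanish : antisymmetrizer R U * jucysMurphy R (U.erase z) k *
      symmetrizer R (insert k (insert z T)) = 0 := by
    rw [jucysMurphy, mul_sum, sum_mul]
    refine sum_eq_zero fun u hu => ?_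
    rw [mem_erase] at hu
    exact antisymmetrizer_mul_swap_mul_symmetrizer hz (by simp) hu.2 (by simp) hu.1
      (ne_of_mem_of_not_mem hz hkU).symm
  rw [hsplit, mul_add, add_mul, hvanish, zero_add, mul_assoc,
    jucysMurphy_mul_symmetrizer (subset_insert _ _) (mem_insert_self _ _), mul_smul_comm,
    card_insert_of_notMem hzT, Nat.cast_succ]

theorem antisymmetrizer_mul_permSum_mul_symmetrizer (hf : IsSwapScaling f c) (hz : z ∈ U)
    (hUT : Disjoint U T) :
    antisymmetrizer R U * permSum f (U ∪ T) * symmetrizer R (insert z T) =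
      (f 1 * (∏ j ∈ range #U, (1 - c * j)) * ∏ i ∈ range #T, (1 + c * (i + 1))) •
        (antisymmetrizer R U * symmetrizer R (insert z T)) := by
  induction T using Finset.induction_on with
  | empty => rw [union_empty, antisymmetrizer_mul_permSum hf subset_rfl]; simp
  | insert k T hk ih =>
    rw [disjoint_insert_right] at hUT
    have hkV : k ∉ insert z T := by simp [(ne_of_mem_of_not_mem hz hUT.1).symm, hk]
    have hkUT : k ∉ U ∪ T := by simp [hUT.1, hk]
    have hVUT : insert z T ⊆ U ∪ T := insert_subset (mem_union_left _ hz) subset_union_right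
    rw [insert_comm, union_insert, card_insert_of_notMem hk, prod_range_succ, ← mul_assoc]
    set κ := f 1 * (∏ j ∈ range #U, (1 - c * j)) * ∏ i ∈ range #T, (1 + c * (i + 1))
    set A := antisymmetrizer R U
    set F := permSum f (U ∪ T)
    set J := jucysMurphy R (U ∪ T) k
    set J' := jucysMurphy R (insert z T) k
    set B := symmetrizer R (insert z T)
    set B' := symmetrizer R (insert k (insert z T))
    have hJF : Commute (1 + c • J) F := commute_one_add_smul_jucysMurphy_permSum subset_rfl hkUT _ _
    have hJB : Commute (1 + c • J) B := commute_one_add_smul_jucysMurphy_permSum hVUT hkUT _ _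
    have hBJ' : B' = B * (1 + J') := symmetrizer_insert hkV
    have hJB' : A * (1 + c • J) * B' = (1 + c * (#T + 1)) • (A * B') := by
      rw [mul_add, mul_one, add_mul, mul_smul_comm, smul_mul_assoc,
        antisymmetrizer_mul_jucysMurphy_mul_symmetrizer hz hUT.2 hUT.1]
      module
    calc A * permSum f (insert k (U ∪ T)) * B'
        = A * F * B * (1 + c • J) * (1 + J') := by
          rw [permSum_insert hf hkUT, hJF.eq, hBJ']
          simp only [mul_assoc, hJB.left_comm]
      _ = κ • (A * (1 + c • J) * B') := by
          rw [ih hUT.2, hBJ', smul_mul_assoc, smul_mul_assoc, mul_assoc A B, ← hJB.eq]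
          simp only [mul_assoc]
      _ = (κ * (1 + c * (#T + 1))) • (A * B') := by rw [hJB', smul_smul]

end Sign

section Coeff

variable [DecidableEq (Perm α)]

theorem coeff_permSum (f : Perm α → R) (U : Finset α) (σ : Perm α) :
    (permSum f U).coeff σ = if σ ∈ permsOfFinset U then f σ else 0 := by
  rw [permSum, MonoidAlgebra.coeff_sum, Finsupp.finsetSum_apply]
  simp_rw [MonoidAlgebra.coeff_single, Finsupp.single_apply]
  rw [sum_ite_eq']

theorem coeff_permSum_mul_permSum (f g : Perm α → R) (U V : Finset α) (σ : Perm α) :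
    (permSum f U * permSum g V).coeff σ =
      ∑ p ∈ permsOfFinset U, if p⁻¹ * σ ∈ permsOfFinset V then f p * g (p⁻¹ * σ) else 0 := by
  conv_lhs => rw [permSum, sum_mul, MonoidAlgebra.coeff_sum, Finsupp.finsetSum_apply]
  simp_rw [MonoidAlgebra.coeff_single_mul_apply, coeff_permSum, mul_ite, mul_zero]

end Coeff

theorem coeff_one_permSum_mul_permSum (hUV : #(U ∩ V) ≤ 1) (f g : Perm α → R) :
    (permSum f U * permSum g V).coeff 1 = f 1 * g 1 := by
  classical
  have hinter (p : Perm α) : p ∈ permsOfFinset U ∧ p ∈ permsOfFinset V ↔ p = 1 := by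
    rw [← mem_singleton, ← permsOfFinset_eq_singleton_one hUV]
    simp only [mem_perms_of_finset_iff, mem_inter]
    exact ⟨fun h _ hx => ⟨h.1 hx, h.2 hx⟩, fun h => ⟨fun hx => (h hx).1, fun hx => (h hx).2⟩⟩
  have h1 := (hinter 1).2 rfl
  rw [coeff_permSum_mul_permSum, sum_eq_single_of_mem 1 h1.1]
  · simp [h1.2]
  · intro p hp hne
    rw [mul_one, if_neg fun h => hne ((hinter p).1 ⟨hp, inv_inv p ▸ inv_mem_permsOfFinset h⟩)]

end PermSum

section Hook

variable {α R : Type*} [Fintype α] [DecidableEq α] [CommRing R] {z : α} {S : Finset α}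
  {f : Perm α → R} {c : R} {σ : Perm α}

variable (R) in
/-- The Young symmetrizer of the hook with first column `insert z S` and first row `Sᶜ`. It is
meant for `z ∉ S`, so that `z` is the corner of the hook. -/
noncomputable def hookElement (z : α) (S : Finset α) : MonoidAlgebra R (Perm α) :=
  antisymmetrizer R (insert z S) * symmetrizer R Sᶜ

theorem coeff_one_hookElement (hz : z ∉ S) : (hookElement R z S).coeff 1 = 1 := by
  have hinter : insert z S ∩ Sᶜ = {z} := by
    rw [insert_inter_of_mem (mem_compl.2 hz), inter_compl, insert_empty]
  rw [hookElement, antisymmetrizer, symmetrizer,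
    coeff_one_permSum_mul_permSum (by rw [hinter, card_singleton]), map_one, map_one, mul_one]

theorem antisymmetrizer_mul_permSum_univ_mul_symmetrizer [IsAddTorsionFree R]
    (hf : IsSwapScaling f c) (hz : z ∉ S) :
    antisymmetrizer R (insert z S) * permSum f univ * symmetrizer R Sᶜ =
      (f 1 * (∏ j ∈ range (#S + 1), (1 - c * j)) *
        ∏ i ∈ range (Fintype.card α - (#S + 1)), (1 + c * (i + 1))) • hookElement R z S := by
  have hSc : Sᶜ = insert z (insert z S)ᶜ := by
    rw [compl_insert, insert_erase (mem_compl.2 hz)]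
  have h := antisymmetrizer_mul_permSum_mul_symmetrizer hf (mem_insert_self z S)
    disjoint_compl_right
  rwa [union_compl, ← hSc, card_compl, card_insert_of_notMem hz] at h

variable (R) in
/-- The alternating sum of all hook symmetrizers with corner `z`. -/
noncomputable def alternatingHookSum (z : α) : MonoidAlgebra R (Perm α) :=
  ∑ S ∈ (univ.erase z).powerset, (-1 : R) ^ #S • hookElement R z S

theorem coeff_alternatingHookSum (z : α) (σ : Perm α) : (alternatingHookSum R z).coeff σ =
    ∑ S ∈ (univ.erase z).powerset, (-1) ^ #S * (hookElement R z S).coeff σ := by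
  rw [alternatingHookSum, MonoidAlgebra.coeff_sum, Finsupp.finsetSum_apply]
  rfl

theorem coeff_hookElement (z : α) (S : Finset α) (σ : Perm α) :
    (hookElement R z S).coeff σ = ∑ p, signChar R p *
      ((∏ j ∈ univ.erase z \ S, if p j = j then 1 else 0) *
        ∏ j ∈ S, if p j = σ j then 1 else 0) := by
  have hcolumn (p : Perm α) : p ∈ permsOfFinset (insert z S) ↔ ∀ j ∈ univ.erase z \ S, p j = j := by
    simp only [mem_perms_of_finset_iff, mem_sdiff, mem_erase, mem_univ, mem_insert]
    exact forall_congr' fun j => by tauto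
  have hrow (p : Perm α) : p⁻¹ * σ ∈ permsOfFinset Sᶜ ↔ ∀ j ∈ S, p j = σ j := by
    simp only [mem_perms_of_finset_iff, mem_compl, Perm.mul_apply, Perm.inv_eq_iff_eq, ne_eq]
    exact forall_congr' fun j => by rw [not_imp_not, eq_comm]
  rw [hookElement, antisymmetrizer, symmetrizer, coeff_permSum_mul_permSum,
    ← univ_inter (permsOfFinset _), ← sum_ite_mem]
  simp_rw [prod_boole, hcolumn, hrow, MonoidHom.one_apply]
  refine sum_congr rfl fun p _ => ?_
  split_ifs <;> simp

variable (R) in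
/-- The matrix of `1 - σ` with column `z` replaced by ones. -/
def cycleMatrix (z : α) (σ : Perm α) : Matrix α α R :=
  Matrix.of fun i j => if j = z then 1 else (if i = j then 1 else 0) - if i = σ j then 1 else 0

theorem coeff_alternatingHookSum_eq_det (z : α) (σ : Perm α) :
    (alternatingHookSum R z).coeff σ = (cycleMatrix R z σ).det := by
  have hcol (p : Perm α) : ∏ j, cycleMatrix R z σ (p j) j =
      ∏ j ∈ univ.erase z, ((if p j = j then 1 else 0) - if p j = σ j then 1 else 0) := by
    rw [← mul_prod_erase univ _ (mem_univ z)]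
    simp only [cycleMatrix, Matrix.of_apply, if_true, one_mul]
    exact prod_congr rfl fun j hj => if_neg (ne_of_mem_erase hj)
  simp_rw [Matrix.det_apply', hcol, prod_sub, mul_sum]
  rw [sum_comm, coeff_alternatingHookSum]
  refine sum_congr rfl fun S _ => ?_
  rw [coeff_hookElement, mul_sum]
  refine sum_congr rfl fun p _ => ?_
  rw [mul_left_comm, ← mul_assoc _ (∏ _ ∈ _, _)]
  rfl

theorem coeff_alternatingHookSum_eq_zero [IsDomain R] {x : α} (hx : ¬σ.SameCycle x z) :
    (alternatingHookSum R z).coeff σ = 0 := by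
  classical
  rw [coeff_alternatingHookSum_eq_det, ← Matrix.exists_mulVec_eq_zero_iff]
  let v : α → R := fun j => if σ.SameCycle x j then 1 else 0
  have hv : v ≠ 0 := fun h => one_ne_zero ((if_pos (.refl σ x)).symm.trans (congrFun h x))
  refine ⟨v, hv, funext fun i => ?_⟩
  have hterm (j : α) : cycleMatrix R z σ i j * v j =
      (if i = j then v j else 0) - if σ.symm i = j then v j else 0 := by
    by_cases hj : j = z
    · simp [v, hj, hx]
    · simp [cycleMatrix, hj, sub_mul, symm_apply_eq]
  simp_rw [Matrix.mulVec, dotProduct, hterm]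
  rw [sum_sub_distrib]
  simp [v]

theorem sum_coeff_mul {G : Type*} [Monoid G] [Fintype G] (x y : MonoidAlgebra R G) :
    ∑ g, (x * y).coeff g = (∑ g, x.coeff g) * ∑ g, y.coeff g := by
  have haug (x : MonoidAlgebra R G) : ∑ g, x.coeff g = MonoidAlgebra.lift R R G 1 x := by
    rw [MonoidAlgebra.lift_apply, Finsupp.sum_fintype _ _ (by simp)]
    simp
  simp only [haug, map_mul]

theorem sum_coeff_antisymmetrizer [IsAddTorsionFree R] {U : Finset α} {u k : α} (hu : u ∈ U)
    (hk : k ∈ U) (huk : u ≠ k) : ∑ σ, (antisymmetrizer R U).coeff σ = 0 := by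
  have h := sum_coeff_mul (antisymmetrizer R U) (.single (swap u k) 1)
  rw [antisymmetrizer_mul_swap hu hk huk] at h
  simp only [MonoidAlgebra.coeff_neg, Finsupp.neg_apply, sum_neg_distrib,
    MonoidAlgebra.coeff_single, Finsupp.single_apply, sum_ite_eq, mem_univ, if_true, mul_one] at h
  exact self_eq_neg.1 h.symm

theorem sum_coeff_symmetrizer (U : Finset α) :
    ∑ σ, (symmetrizer R U).coeff σ = (#U).factorial := by
  simp_rw [symmetrizer, coeff_permSum]
  rw [sum_ite_mem, univ_inter]
  simp [card_perms_of_finset]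

theorem sum_coeff_alternatingHookSum [IsAddTorsionFree R] (z : α) :
    ∑ σ, (alternatingHookSum R z).coeff σ = (Fintype.card α).factorial := by
  simp_rw [coeff_alternatingHookSum]
  rw [sum_comm, sum_eq_single_of_mem ∅ (empty_mem_powerset _)]
  · have hcolumn : antisymmetrizer R ({z} : Finset α) = 1 := by
      rw [antisymmetrizer, permSum_of_card_le_one (card_singleton z).le, map_one, one_smul]
    simp_rw [hookElement, insert_empty, hcolumn, one_mul, compl_empty, card_empty, pow_zero,
      one_mul]
    rw [sum_coeff_symmetrizer, card_univ]
  · intro S hS hne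
    obtain ⟨s, hs⟩ := nonempty_iff_ne_empty.2 hne
    have hzs : z ≠ s := (ne_of_mem_erase (mem_powerset.1 hS hs)).symm
    rw [← mul_sum, hookElement, sum_coeff_mul,
      sum_coeff_antisymmetrizer (mem_insert_self z S) (mem_insert_of_mem hs) hzs, zero_mul,
      mul_zero]

end Hook

section Conjugacy

variable {G R : Type*} [Fintype G] [CommSemiring R]

theorem coeff_sum_single (f : G → R) (σ : G) :
    (∑ τ, MonoidAlgebra.single τ (f τ)).coeff σ = f σ := by
  classical
  rw [MonoidAlgebra.coeff_sum, Finsupp.finsetSum_apply]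
  simp [MonoidAlgebra.coeff_single, Finsupp.single_apply]

variable [Group G]

theorem forall_commute_sum_single_iff (f : G → R) :
    (∀ y, Commute (∑ σ, MonoidAlgebra.single σ (f σ)) y) ↔ ∀ σ τ, f (τ * σ * τ⁻¹) = f σ := by
  constructor
  · intro h σ τ
    have hcoeff := congrArg (fun y => y.coeff (τ * σ)) (h (.single τ 1)).eq
    simpa only [MonoidAlgebra.coeff_mul_single_apply, MonoidAlgebra.coeff_single_mul_apply,
      coeff_sum_single, one_mul, mul_one, inv_mul_cancel_left] using hcoeff
  · intro h y
    induction y using MonoidAlgebra.induction_linear with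
    | zero => exact Commute.zero_right _
    | add y₁ y₂ h₁ h₂ => exact h₁.add_right h₂
    | single τ r =>
      rw [commute_iff_eq]
      ext π
      rw [MonoidAlgebra.coeff_mul_single_apply, MonoidAlgebra.coeff_single_mul_apply,
        coeff_sum_single, coeff_sum_single, ← h (τ⁻¹ * π) τ, mul_inv_cancel_left, mul_comm]

theorem conj_invariant_of_mul_eq_one {w f : G → R}
    (hw : (∑ σ, MonoidAlgebra.single σ (w σ)) * ∑ σ, MonoidAlgebra.single σ (f σ) = 1)
    (hf : ∀ σ τ, f (τ * σ * τ⁻¹) = f σ) (σ τ : G) : w (τ * σ * τ⁻¹) = w σ := by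
  have hcentral := (forall_commute_sum_single_iff f).2 hf
  refine (forall_commute_sum_single_iff w).1 (fun y => ?_) σ τ
  set W := ∑ σ, MonoidAlgebra.single σ (w σ)
  set F := ∑ σ, MonoidAlgebra.single σ (f σ)
  calc W * y = W * y * (W * F) := by rw [hw, mul_one]
    _ = W * (y * F) * W := by rw [← (hcentral W).eq]; simp only [mul_assoc]
    _ = y * W := by rw [← (hcentral y).eq, ← mul_assoc, hw, one_mul]

theorem coeff_one_sum_single_mul (w : G → R) (y : MonoidAlgebra R G) :
    ((∑ σ, MonoidAlgebra.single σ (w σ)) * y).coeff 1 = ∑ σ, w σ⁻¹ * y.coeff σ := by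
  rw [sum_mul, MonoidAlgebra.coeff_sum, Finsupp.finsetSum_apply, ← Equiv.sum_comp (.inv G)]
  simp [MonoidAlgebra.coeff_single_mul_apply]

end Conjugacy

theorem isConj_finRotate_of_sameCycle {d : ℕ} {z : Fin d} {σ : Perm (Fin d)}
    (h : ∀ x, σ.SameCycle x z) : IsConj σ (finRotate d) := by
  rcases d with _ | _ | d
  · exact z.elim0
  · rw [show σ = finRotate (0 + 1) from Equiv.ext fun x => Fin.ext (by lia)]
  · have hmoved (x) : σ x ≠ x := fun hx => by
      obtain ⟨y, hy⟩ := exists_ne x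
      exact hy (((h x).trans (h y).symm).eq_of_left hx).symm
    have hcycle : σ.IsCycle := ⟨z, hmoved z, fun y _ => (h y).symm⟩
    have hsupport : σ.support = univ := by ext x; simp [hmoved x]
    rw [Perm.isConj_iff_cycleType_eq, hcycle.cycleType, hsupport, cycleType_finRotate]
    simp

section Arithmetic

variable {K : Type*} [Field K]

theorem fwdDiff_iter_inv_prod_range (m k : ℕ) (y : K) (hy : ∀ i < m + k, y + i ≠ 0) :
    (fwdDiff 1)^[k] (fun y : K => (∏ i ∈ range m, (y + i))⁻¹) y =
      (-1) ^ k * m.ascFactorial k / ∏ i ∈ range (m + k), (y + i) := by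
  induction k generalizing y with
  | zero => simp
  | succ k ih =>
    have hshift (i : ℕ) : y + 1 + i = y + (i + 1 : ℕ) := by push_cast; ring
    rw [Function.iterate_succ_apply', fwdDiff, ih y fun i hi => hy i (by lia),
      ih (y + 1) fun i hi => hshift i ▸ hy (i + 1) (by lia), Nat.ascFactorial_succ]
    set P := ∏ i ∈ range (m + k), (y + 1 + i)
    set Q := ∏ i ∈ range (m + k), (y + i)
    have hP : ∏ i ∈ range (m + (k + 1)), (y + i) = P * y := by
      rw [← add_assoc, prod_range_succ', Nat.cast_zero, add_zero]
      simp only [P, hshift]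
    have hQ : ∏ i ∈ range (m + (k + 1)), (y + i) = Q * (y + (m + k : ℕ)) := by
      rw [← add_assoc, prod_range_succ]
    have hne : ∏ i ∈ range (m + (k + 1)), (y + i) ≠ 0 :=
      prod_ne_zero_iff.2 fun i hi => hy i (mem_range.1 hi)
    have hPinv : P⁻¹ = y / ∏ i ∈ range (m + (k + 1)), (y + i) := by
      rw [hP] at hne ⊢
      rw [div_mul_cancel_right₀ (right_ne_zero_of_mul hne)]
    have hQinv : Q⁻¹ = (y + (m + k : ℕ)) / ∏ i ∈ range (m + (k + 1)), (y + i) := by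
      rw [hQ] at hne ⊢
      rw [div_mul_cancel_right₀ (right_ne_zero_of_mul hne)]
    rw [div_eq_mul_inv _ P, div_eq_mul_inv _ Q, hPinv, hQinv]
    push_cast
    ring

theorem sum_powerset_neg_one_pow_mul_inv_prod {α : Type*} (s : Finset α) (m : ℕ) (x : K)
    (hx : ∀ i < m + #s, x - #s + i ≠ 0) :
    ∑ S ∈ s.powerset, (-1) ^ #S * (∏ i ∈ range m, (x - #S + i))⁻¹ =
      (-1) ^ #s * m.ascFactorial #s / ∏ i ∈ range (m + #s), (x - #s + i) := by
  rw [← fwdDiff_iter_inv_prod_range m #s _ hx, fwdDiff_iter_eq_sum_shift,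
    sum_powerset_apply_card fun b => (-1) ^ b * (∏ i ∈ range m, (x - b + i))⁻¹,
    ← sum_range_reflect]
  refine sum_congr rfl fun b hb => ?_
  have hb : b ≤ #s := Nat.lt_succ_iff.1 (mem_range.1 hb)
  rw [Nat.add_sub_cancel, Nat.choose_symm hb, Nat.cast_sub hb]
  simp only [nsmul_eq_mul, zsmul_eq_mul, mul_one, sub_add]
  push_cast
  ring

theorem pow_mul_prod_one_sub_mul_prod_one_add (a b : ℕ) {x : K} (hx : x ≠ 0) :
    x ^ (b + 1 + a) * (∏ j ∈ range (b + 1), (1 - x⁻¹ * j)) * ∏ i ∈ range a, (1 + x⁻¹ * (i + 1)) =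
      ∏ i ∈ range (b + 1 + a), (x - b + i) := by
  have hcolumn : x ^ (b + 1) * ∏ j ∈ range (b + 1), (1 - x⁻¹ * j) =
      ∏ i ∈ range (b + 1), (x - b + i) := by
    rw [← prod_range_reflect (fun i : ℕ => x - b + i), pow_eq_prod_const, ← prod_mul_distrib]
    refine prod_congr rfl fun j hj => ?_
    rw [Nat.add_sub_cancel, Nat.cast_sub (Nat.lt_succ_iff.1 (mem_range.1 hj))]
    field_simp
    ring
  have hrow : x ^ a * ∏ i ∈ range a, (1 + x⁻¹ * (i + 1)) =
      ∏ i ∈ range a, (x - b + (b + 1 + i : ℕ)) := by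
    rw [pow_eq_prod_const, ← prod_mul_distrib]
    refine prod_congr rfl fun i _ => ?_
    push_cast
    field_simp
    ring
  rw [prod_range_add (fun i : ℕ => x - b + i), ← hcolumn, ← hrow]
  ring

theorem prod_Icc_sub_eq_prod_range (d : ℕ) (x : K) :
    ∏ j ∈ Icc (-(d : ℤ)) d, (x - j) = ∏ i ∈ range (d + 1 + d), (x - d + i) := by
  refine prod_nbij' (fun j => (d - j).toNat) (fun i => d - i) ?_ ?_ ?_ ?_ fun j hj => ?_
  · intro j hj
    simp only [mem_Icc, mem_range] at *
    lia
  · intro i hi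
    simp only [mem_Icc, mem_range] at *
    lia
  · intro j hj
    simp only [mem_Icc] at hj
    lia
  · intro i _
    lia
  · have hcast : ((d - j).toNat : ℤ) = d - j := Int.toNat_of_nonneg (by simp_all)
    rw [← Int.cast_natCast (d - j).toNat, hcast]
    push_cast
    ring

theorem factorial_succ_mul_catalan (k : ℕ) :
    (k + 1).factorial * catalan k = (k + 1).ascFactorial k := by
  refine Nat.eq_of_mul_eq_mul_left k.factorial_pos ?_
  calc k.factorial * ((k + 1).factorial * catalan k)
      = k.centralBinom * k.factorial * k.factorial := by
        rw [← succ_mul_catalan_eq_centralBinom, Nat.factorial_succ]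
        ring
    _ = (k + k).factorial := by
        rw [Nat.centralBinom_eq_two_mul_choose, two_mul, Nat.add_choose_mul_factorial_mul_factorial]
    _ = k.factorial * (k + 1).ascFactorial k := (Nat.factorial_mul_ascFactorial k k).symm

end Arithmetic

section FullCycle

variable {K : Type*} [Field K] {d : ℕ}

variable (d) in
/-- The element `∑ σ, x ^ #σ • σ` of the group algebra, where `#σ` is the number of cycles of `σ`;
the coefficients of its inverse are the values of the Weingarten function. -/
noncomputable def cycleCountSum (x : K) : MonoidAlgebra K (Perm (Fin d)) :=
  ∑ σ, .single σ (x ^ σ.cycleCount)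

variable {x : K} {W : MonoidAlgebra K (Perm (Fin d))}

theorem ne_zero_of_mul_cycleCountSum_eq_one (hd : 0 < d) (hW : W * cycleCountSum d x = 1) :
    x ≠ 0 := by
  rintro rfl
  simp [cycleCountSum, zero_pow (cycleCount_pos hd _).ne'] at hW

theorem isSwapScaling_pow_cycleCount (hx : x ≠ 0) :
    IsSwapScaling (fun σ : Perm (Fin d) => x ^ σ.cycleCount) x⁻¹ := fun σ u k huk hk => by
  simp only [← cycleCount_swap_mul_add_one huk hk, pow_succ', inv_mul_cancel_left₀ hx]

variable [CharZero K] {z : Fin d} {S : Finset (Fin d)}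

theorem cycleCountSum_mul_hookElement (hx : x ≠ 0) (hz : z ∉ S) :
    cycleCountSum d x * hookElement K z S =
      (∏ i ∈ range d, (x - #S + i)) • hookElement K z S := by
  have hcard : #S + 1 + (d - (#S + 1)) = d := by
    have := card_le_univ (insert z S)
    rw [card_insert_of_notMem hz, Fintype.card_fin] at this
    lia
  have hcentral := (forall_commute_sum_single_iff fun σ : Perm (Fin d) => x ^ σ.cycleCount).2
    fun σ τ => by rw [cycleCount_conj]
  have hconst := pow_mul_prod_one_sub_mul_prod_one_add (d - (#S + 1)) #S hx
  rw [hcard] at hconst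
  rw [hookElement, cycleCountSum, ← mul_assoc, (hcentral _).eq, ← permSum_univ,
    antisymmetrizer_mul_permSum_univ_mul_symmetrizer (isSwapScaling_pow_cycleCount hx) hz,
    cycleCount_one, Fintype.card_fin, hconst, hookElement]

theorem prod_mul_coeff_one_mul_hookElement (hW : W * cycleCountSum d x = 1) (hz : z ∉ S) :
    (∏ i ∈ range d, (x - #S + i)) * (W * hookElement K z S).coeff 1 = 1 := by
  have hx := ne_zero_of_mul_cycleCountSum_eq_one z.pos hW
  calc (∏ i ∈ range d, (x - #S + i)) * (W * hookElement K z S).coeff 1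
      = (W * cycleCountSum d x * hookElement K z S).coeff 1 := by
        rw [mul_assoc, cycleCountSum_mul_hookElement hx hz, mul_smul_comm]
        rfl
    _ = 1 := by rw [hW, one_mul, coeff_one_hookElement hz]

theorem coeff_one_mul_alternatingHookSum (z : Fin d) (hW : W * cycleCountSum d x = 1) :
    (W * alternatingHookSum K z).coeff 1 = (-1) ^ (d - 1) * d.ascFactorial (d - 1) /
      ∏ i ∈ range (d + (d - 1)), (x - (d - 1 : ℕ) + i) := by
  have hcoeff : ∀ S ∈ (univ.erase z).powerset,
      (∏ i ∈ range d, (x - #S + i)) * (W * hookElement K z S).coeff 1 = 1 := fun S hS =>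
    prod_mul_coeff_one_mul_hookElement hW fun hzS => notMem_erase z univ (mem_powerset.1 hS hzS)
  have hcard : #(univ.erase z) = d - 1 := by rw [card_erase_of_mem (mem_univ z), card_fin]
  have hne : ∀ i < d + (d - 1), x - (d - 1 : ℕ) + i ≠ 0 := fun i hi => by
    have hfactor (S) (hS : S ∈ (univ.erase z).powerset) :=
      prod_ne_zero_iff.1 (left_ne_zero_of_mul_eq_one (hcoeff S hS))
    by_cases hid : i < d
    · simpa [hcard] using hfactor _ (mem_powerset_self _) i (mem_range.2 hid)
    · have := hfactor ∅ (empty_mem_powerset _) (i - (d - 1)) (mem_range.2 (by lia))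
      rw [Nat.cast_sub (by lia)] at this
      convert this using 1
      simp only [card_empty, Nat.cast_zero]
      ring
  have hsum := sum_powerset_neg_one_pow_mul_inv_prod (univ.erase z) d x
  rw [hcard] at hsum
  rw [← hsum hne, alternatingHookSum, mul_sum, MonoidAlgebra.coeff_sum, Finsupp.finsetSum_apply]
  refine sum_congr rfl fun S hS => ?_
  rw [mul_smul_comm, ← eq_inv_of_mul_eq_one_right (hcoeff S hS)]
  rfl

theorem coeff_one_sum_single_mul_alternatingHookSum {w : Perm (Fin d) → K}
    (hw : ∀ σ τ, w (τ * σ * τ⁻¹) = w σ) (z : Fin d) :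
    ((∑ σ, .single σ (w σ)) * alternatingHookSum K z).coeff 1 =
      w (finRotate d) * d.factorial := by
  have hterm (σ : Perm (Fin d)) : w σ⁻¹ * (alternatingHookSum K z).coeff σ =
      w (finRotate d) * (alternatingHookSum K z).coeff σ := by
    by_cases h : ∀ y, σ.SameCycle y z
    · obtain ⟨τ, hτ⟩ := isConj_iff.1 (isConj_finRotate_of_sameCycle
        fun y => Perm.sameCycle_inv.2 (h y))
      rw [← hτ, hw]
    · push Not at h
      obtain ⟨y, hy⟩ := h
      rw [coeff_alternatingHookSum_eq_zero hy, mul_zero, mul_zero]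
  simp_rw [coeff_one_sum_single_mul, hterm]
  rw [← mul_sum, sum_coeff_alternatingHookSum, Fintype.card_fin]

end FullCycle

end Weingarten

theorem weingarten_full_cycle_general {K : Type*} [Field K] [CharZero K]
    (d : ℕ) (hd : 1 ≤ d) (x : K) (w : Equiv.Perm (Fin d) → K)
    (hw : (∑ σ : Equiv.Perm (Fin d), MonoidAlgebra.single σ (w σ)) *
          (∑ σ : Equiv.Perm (Fin d), MonoidAlgebra.single σ (x ^ σ.cycleCount)) = 1) :
    w (finRotate d) =
      (-1) ^ (d - 1) * catalan (d - 1) /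
        ∏ j ∈ Finset.Icc (-(d : ℤ) + 1) ((d : ℤ) - 1), (x - j) := by
  obtain ⟨k, rfl⟩ := Nat.exists_eq_add_of_le' hd
  have hclass := Weingarten.conj_invariant_of_mul_eq_one hw fun σ τ => by
    rw [Weingarten.cycleCount_conj]
  have hcoeff := (Weingarten.coeff_one_sum_single_mul_alternatingHookSum hclass 0).symm.trans
    (Weingarten.coeff_one_mul_alternatingHookSum 0 hw)
  have hIcc : Finset.Icc (-((k + 1 : ℕ) : ℤ) + 1) ((k + 1 : ℕ) - 1) =
      Finset.Icc (-(k : ℤ)) k := by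
    congr 1 <;> push_cast <;> ring
  have hfactorial : ((k + 1).factorial : K) ≠ 0 := mod_cast (k + 1).factorial_ne_zero
  rw [Nat.add_sub_cancel, ← Weingarten.factorial_succ_mul_catalan, Nat.cast_mul] at hcoeff
  rw [Nat.add_sub_cancel, hIcc, Weingarten.prod_Icc_sub_eq_prod_range]
  refine mul_right_cancel₀ hfactorial (hcoeff.trans ?_)
  ring

/-- **The Weingarten function of a full cycle**: for the full cycle `γ = (1 2 ⋯ d)` (realized
as `finRotate d`), `Wg(n,γ) = (−1)^{d−1}·Cat_{d−1} / Π_{j=−d+1}^{d−1}(n−j)`.  Here `Wg(n,·)`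
is characterized (for `n ≥ d`) by the fact that `Σ_σ Wg(n,σ)·σ` is the inverse of
`Σ_σ n^{#σ}·σ` in the group algebra `ℂ[S_d]` (hypothesis `hw`). -/
theorem weingarten_full_cycle
    (d n : ℕ) (hd : 1 ≤ d) (hn : d ≤ n)
    (w : Equiv.Perm (Fin d) → ℂ)
    (hw : (∑ σ : Equiv.Perm (Fin d), MonoidAlgebra.single (R := ℂ) σ (w σ)) *
          (∑ σ : Equiv.Perm (Fin d),
            MonoidAlgebra.single (R := ℂ) σ ((n : ℂ) ^ σ.cycleCount)) = 1) :
    w (finRotate d) =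
      (-1 : ℂ) ^ (d - 1) * (catalan (d - 1) : ℂ) /
        ∏ j ∈ Finset.Icc (-(d : ℤ) + 1) ((d : ℤ) - 1), ((n : ℂ) - (j : ℂ)) :=
  weingarten_full_cycle_general d hd (n : ℂ) w hw
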